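/- There exist three point sets in the plane, each with 7 points and convex hulls of equal size, that admit no 3-way compatible triangulation without Steiner points. -/

import Mathlib

noncomputable section
open scoped Classical

/-- The Euclidean plane. -/
abbrev Pt : Type := EuclideanSpace ℝ (Fin 2)

/-- `a`, `b`, `c` are in clockwise orientation (negative signed area). -/
def cwOriented (a b c : Pt) : Prop :=
  (b 0 - a 0) * (c 1 - a 1) - (b 1 - a 1) * (c 0 - a 0) < 0

/-- The vertex set of an (ordered) triangle. -/
def triPts (t : Pt × Pt × Pt) : Set Pt := {t.1, t.2.1, t.2.2}

/-- The closed triangle spanned by an ordered triple. -/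
def triHull (t : Pt × Pt × Pt) : Set Pt := convexHull ℝ (triPts t)

/-- The open triangle spanned by an ordered triple. -/
def triInt (t : Pt × Pt × Pt) : Set Pt := interior (triHull t)

/-- A set of points is in general position if no three of its points are collinear. -/
def GenPos (A : Set Pt) : Prop :=
  ∀ p ∈ A, ∀ q ∈ A, ∀ r ∈ A, p ≠ q → p ≠ r → q ≠ r → ¬ Collinear ℝ ({p, q, r} : Set Pt)

/-- A triangulation of a finite point set `S`: a family of empty triangles, with
vertices in `S` and normalized clockwise orientation, with pairwise disjoint
interiors, covering the convex hull of `S`, and such that every point of `S`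
meeting a triangle is one of its vertices (so all points of `S` are used and
triangles are empty). -/
structure Triangulation (S : Finset Pt) where
  faces : Finset (Pt × Pt × Pt)
  verts_mem : ∀ t ∈ faces, triPts t ⊆ (S : Set Pt)
  cw_face : ∀ t ∈ faces, cwOriented t.1 t.2.1 t.2.2
  empty_face : ∀ t ∈ faces, ∀ p ∈ S, p ∈ triHull t → p ∈ triPts t
  disj : ∀ t ∈ faces, ∀ t' ∈ faces, t ≠ t' → triInt t ∩ triInt t' = ∅
  cover : (⋃ t ∈ faces, triHull t) = convexHull ℝ (S : Set Pt)

/-- `(a,b,c)` is a (clockwise) face of the triangulation, up to cyclic rotation. -/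
def IsFace {S : Finset Pt} (T : Triangulation S) (a b c : Pt) : Prop :=
  (a, b, c) ∈ T.faces ∨ (b, c, a) ∈ T.faces ∨ (c, a, b) ∈ T.faces

/-- Compatibility of two triangulations via a prescribed bijection:
clockwise-oriented triangles correspond to clockwise-oriented triangles. -/
def CompatibleVia {S T' : Finset Pt} (TS : Triangulation S) (TT : Triangulation T')
    (f : Pt → Pt) : Prop :=
  Set.BijOn f (S : Set Pt) (T' : Set Pt) ∧
    ∀ a ∈ S, ∀ b ∈ S, ∀ c ∈ S, (IsFace TS a b c ↔ IsFace TT (f a) (f b) (f c))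

/-- Two triangulations are compatible if some bijection realizes the compatibility. -/
def Compatible {S T' : Finset Pt} (TS : Triangulation S) (TT : Triangulation T') : Prop :=
  ∃ f : Pt → Pt, CompatibleVia TS TT f

/-- The number of extreme points of `S` (points on the boundary of the convex hull). -/
def hullCount (S : Finset Pt) : ℕ :=
  (S.filter (fun p => p ∈ frontier (convexHull ℝ (S : Set Pt)))).card

/-!
The extreme points of a point set can be read off from the face incidences of any of its
triangulations: an edge starting at an interior point of the convex hull has a face on each side,
whereas an edge of the hull has a face on one side only. A compatible bijection therefore maps
extreme points to extreme points and interior points to interior points.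

Take three sets with four extreme and three interior points. In the first, an extreme point is
joined to all interior points in every triangulation; in the second, the interior points form a face
of every triangulation. Transported to the third set, these edges and this face would have to
coexist there. But there every extreme point lies in the cone spanned at some corner of the interior
triangle by its two sides, so the edge joining it to that corner would enter the face. Edges and
faces are forced by test points: the face covering a test point is an empty triangle containing it,
and few triangles qualify.
-/

open Filter Topology

/-! ### Orientation -/

/-- Twice the signed area of the triangle `abc`: positive if the triangle is counterclockwise,
negative if it is clockwise, and, as a function of `c`, affine and zero exactly on the line `ab`. -/
def orient (a b c : Pt) : ℝ :=
  (b 0 - a 0) * (c 1 - a 1) - (b 1 - a 1) * (c 0 - a 0)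

section Orient

variable {a b c p x y : Pt} {A K : Set Pt}

@[simp]
lemma orient_self_left (a b : Pt) : orient a b a = 0 := by simp [orient]

@[simp]
lemma orient_self_right (a b : Pt) : orient a b b = 0 := by
  rw [orient]
  ring

lemma orient_rotate (a b c : Pt) : orient b c a = orient a b c := by
  simp only [orient]
  ring

lemma orient_swap (a b c : Pt) : orient b a c = -orient a b c := by
  simp only [orient]
  ring

lemma orient_combo {s t : ℝ} (a b x y : Pt) (h : s + t = 1) :
    orient a b (s • x + t • y) = s * orient a b x + t * orient a b y := by
  obtain rfl : t = 1 - s := by linarith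
  simp only [orient, PiLp.add_apply, PiLp.smul_apply, smul_eq_mul]
  ring

lemma continuous_orient (a b : Pt) : Continuous (orient a b) := by
  unfold orient
  fun_prop

lemma orient_nonpos_of_mem_convexHull (h : ∀ y ∈ A, orient a b y ≤ 0)
    (hx : x ∈ convexHull ℝ A) : orient a b x ≤ 0 := by
  refine convexHull_min (t := {y | orient a b y ≤ 0}) h ?_ hx
  intro y hy z hz s t hs ht hst
  simp only [Set.mem_ofPred_eq] at hy hz ⊢
  rw [orient_combo a b y z hst]
  exact add_nonpos (mul_nonpos_of_nonneg_of_nonpos hs hy) (mul_nonpos_of_nonneg_of_nonpos ht hz)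

lemma orient_add_orient_add_orient (a b c x : Pt) :
    orient b c x + orient c a x + orient a b x = orient a b c := by
  simp only [orient]
  ring

lemma orient_smul_eq (a b c x : Pt) :
    orient a b c • x = orient b c x • a + orient c a x • b + orient a b x • c := by
  ext i
  fin_cases i <;> simp [orient] <;> ring

lemma eq_of_orient_eq_zero (h : orient a b c ≠ 0) (hab : orient a b x = 0)
    (hbc : orient b c x = 0) : x = b := by
  have hca : orient c a x = orient a b c := by
    linarith [orient_add_orient_add_orient a b c x]
  have hx := orient_smul_eq a b c x
  rw [hab, hbc, hca, zero_smul, zero_smul, zero_add, add_zero] at hx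
  exact smul_right_injective Pt h hx

lemma collinear_iff_orient_eq_zero : Collinear ℝ {a, b, c} ↔ orient a b c = 0 := by
  constructor
  · intro h
    obtain ⟨v, hv⟩ := (collinear_iff_of_mem (p₀ := a) (by simp)).1 h
    obtain ⟨r, rfl⟩ := hv b (by simp)
    obtain ⟨s, rfl⟩ := hv c (by simp)
    simp [orient]
    ring
  · intro h
    rcases eq_or_ne a b with rfl | hab
    · simpa using collinear_pair ℝ a c
    obtain ⟨r, hr⟩ : ∃ r : ℝ, c = a + r • (b - a) := by
      rw [orient, sub_eq_zero] at h
      rcases eq_or_ne (b 0) (a 0) with h0 | h0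
      · have h1 : b 1 - a 1 ≠ 0 := fun h1 => hab <| by
          ext i
          fin_cases i
          · exact h0.symm
          · exact (sub_eq_zero.1 h1).symm
        refine ⟨(c 1 - a 1) / (b 1 - a 1), ?_⟩
        ext i
        fin_cases i <;> simp <;> field_simp <;> linarith
      · have h1 : b 0 - a 0 ≠ 0 := sub_ne_zero.2 h0
        refine ⟨(c 0 - a 0) / (b 0 - a 0), ?_⟩
        ext i
        fin_cases i <;> simp <;> field_simp <;> linarith
    refine (collinear_iff_of_mem (p₀ := a) (by simp)).2 ⟨b - a, ?_⟩
    simp only [Set.mem_insert_iff, Set.mem_singleton_iff, forall_eq_or_imp, forall_eq]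
    exact ⟨⟨0, by simp⟩, ⟨1, by simp⟩, ⟨r, by rw [hr]; simp [add_comm]⟩⟩

lemma eventually_orient_combo_neg
    (h : orient a b x < 0 ∨ orient a b x = 0 ∧ orient a b y < 0) :
    ∀ᶠ δ : ℝ in 𝓝[>] 0, orient a b ((1 - δ) • x + δ • y) < 0 := by
  rcases h with h | ⟨hx, hy⟩
  · have hcont : Continuous fun δ : ℝ => orient a b ((1 - δ) • x + δ • y) :=
      (continuous_orient a b).comp (by fun_prop)
    have hlim := hcont.tendsto 0
    simp only [sub_zero, one_smul, zero_smul, add_zero] at hlim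
    exact (hlim.eventually_lt_const h).filter_mono nhdsWithin_le_nhds
  · filter_upwards [self_mem_nhdsWithin] with δ hδ
    rw [orient_combo a b x y (by ring), hx, mul_zero, zero_add]
    exact mul_neg_of_pos_of_neg hδ hy

lemma orient_eq_zero_of_mem_segment (hx : x ∈ segment ℝ a b) : orient a b x = 0 := by
  obtain ⟨s, t, -, -, hst, rfl⟩ := hx
  simp [orient_combo a b a b hst]

lemma mem_closure_inter_orient_pos (hx : x ∈ interior K) (hax : orient a b x = 0)
    (hay : orient a b y < 0) : x ∈ closure (K ∩ {z | 0 < orient a b z}) := by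
  have hlim : Tendsto (fun δ : ℝ => (1 + δ) • x + (-δ) • y) (𝓝[>] 0) (𝓝 x) := by
    have hcont : Continuous fun δ : ℝ => (1 + δ) • x + (-δ) • y := by fun_prop
    simpa using (hcont.tendsto 0).mono_left nhdsWithin_le_nhds
  refine mem_closure_of_tendsto hlim ?_
  filter_upwards [hlim.eventually (isOpen_interior.mem_nhds hx), self_mem_nhdsWithin]
    with δ hδK hδ
  refine ⟨interior_subset hδK, ?_⟩
  rw [Set.mem_ofPred_eq, orient_combo a b x y (by ring), hax, mul_zero, zero_add]
  exact mul_pos_of_neg_of_neg (neg_neg_of_pos hδ) hay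

lemma notMem_interior_convexHull (h : ∀ y ∈ A, orient a b y ≤ 0) (hx : orient a b x = 0)
    (hy : orient a b y < 0) : x ∉ interior (convexHull ℝ A) := by
  intro hint
  obtain ⟨z, hz, hpos⟩ := closure_nonempty_iff.1 ⟨x, mem_closure_inter_orient_pos hint hx hy⟩
  exact (orient_nonpos_of_mem_convexHull h hz).not_gt hpos

lemma eq_or_orient_neg_of_mem_convexHull (h : ∀ y ∈ A, y = p ∨ orient a b y < 0)
    (hp : orient a b p = 0) (hx : x ∈ convexHull ℝ A) : x = p ∨ orient a b x < 0 := by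
  refine convexHull_min (t := {y | y = p ∨ orient a b y < 0}) h ?_ hx
  rw [convex_iff_forall_pos]
  rintro y hy z hz s t hs ht hst
  simp only [Set.mem_ofPred_eq, orient_combo a b y z hst]
  rcases hy with rfl | hy <;> rcases hz with rfl | hz
  · exact Or.inl (Convex.combo_self hst _)
  · right; rw [hp, mul_zero, zero_add]; exact mul_neg_of_pos_of_neg ht hz
  · right; rw [hp, mul_zero, add_zero]; exact mul_neg_of_pos_of_neg hs hy
  · exact Or.inr (add_neg (mul_neg_of_pos_of_neg hs hy) (mul_neg_of_pos_of_neg ht hz))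

lemma GenPos.eq_or_eq_of_orient_eq_zero (hA : GenPos A) (ha : a ∈ A) (hb : b ∈ A) (hx : x ∈ A)
    (hab : a ≠ b) (h : orient a b x = 0) : x = a ∨ x = b := by
  by_contra! hne
  exact hA a ha b hb x hx hab hne.1.symm hne.2.symm (collinear_iff_orient_eq_zero.2 h)

end Orient

/-! ### Triangles -/

section Triangle

variable {a b c x y : Pt}

lemma left_mem_triPts (a b c : Pt) : a ∈ triPts (a, b, c) := by simp [triPts]

lemma middle_mem_triPts (a b c : Pt) : b ∈ triPts (a, b, c) := by simp [triPts]

lemma right_mem_triPts (a b c : Pt) : c ∈ triPts (a, b, c) := by simp [triPts]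

lemma mem_triPts : x ∈ triPts (a, b, c) ↔ x = a ∨ x = b ∨ x = c := Iff.rfl

lemma triPts_rotate (a b c : Pt) : triPts (b, c, a) = triPts (a, b, c) := by
  ext x
  simp only [mem_triPts]
  tauto

lemma triPts_subset_triHull (t : Pt × Pt × Pt) : triPts t ⊆ triHull t :=
  subset_convexHull ℝ _

lemma convex_triHull (t : Pt × Pt × Pt) : Convex ℝ (triHull t) :=
  convex_convexHull ℝ _

lemma segment_subset_triHull (a b c : Pt) : segment ℝ a b ⊆ triHull (a, b, c) :=
  (convex_triHull _).segment_subset (triPts_subset_triHull _ (left_mem_triPts a b c))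
    (triPts_subset_triHull _ (middle_mem_triPts a b c))

lemma isClosed_triHull (t : Pt × Pt × Pt) : IsClosed (triHull t) :=
  (Set.toFinite {t.1, t.2.1, t.2.2}).isClosed_convexHull ℝ

lemma mem_triHull_iff (h : orient a b c < 0) :
    x ∈ triHull (a, b, c) ↔ orient a b x ≤ 0 ∧ orient b c x ≤ 0 ∧ orient c a x ≤ 0 := by
  constructor
  · intro hx
    refine ⟨?_, ?_, ?_⟩ <;>
    · refine orient_nonpos_of_mem_convexHull ?_ hx
      simp [triPts, orient_rotate a b c, orient_rotate b c a, h.le]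
  · rintro ⟨hab, hbc, hca⟩
    have hx : x = (orient b c x / orient a b c) • a + (orient c a x / orient a b c) • b +
        (orient a b x / orient a b c) • c := by
      have := congrArg ((orient a b c)⁻¹ • ·) (orient_smul_eq a b c x)
      simpa only [inv_smul_smul₀ h.ne, smul_add, smul_smul, inv_mul_eq_div] using this
    have hmem := (convex_triHull (a, b, c)).sum_mem (t := Finset.univ) (z := ![a, b, c])
      (w := ![orient b c x / orient a b c, orient c a x / orient a b c,
        orient a b x / orient a b c])
      (by simp [Fin.forall_fin_succ, div_nonneg_of_nonpos, hab, hbc, hca, h.le])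
      (by simp [Fin.sum_univ_three, ← add_div, orient_add_orient_add_orient, h.ne])
      (by simp [Fin.forall_fin_succ, triPts_subset_triHull _ (left_mem_triPts a b c),
        triPts_subset_triHull _ (middle_mem_triPts a b c),
        triPts_subset_triHull _ (right_mem_triPts a b c)])
    rw [hx]
    simpa [Fin.sum_univ_three] using hmem

lemma mem_triInt_of_orient_neg (h : orient a b c < 0) (hab : orient a b x < 0)
    (hbc : orient b c x < 0) (hca : orient c a x < 0) : x ∈ triInt (a, b, c) := by
  have hopen (p q : Pt) : IsOpen {y | orient p q y < 0} :=
    isOpen_lt (continuous_orient p q) continuous_const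
  refine mem_interior.2 ⟨_, ?_, (hopen a b).inter ((hopen b c).inter (hopen c a)),
    hab, hbc, hca⟩
  rintro y ⟨hab, hbc, hca⟩
  exact (mem_triHull_iff h).2 ⟨hab.le, hbc.le, hca.le⟩

lemma exists_mem_segment_triInt (h : orient a b c < 0)
    (hab : orient a b x < 0 ∨ orient a b x = 0 ∧ orient a b y < 0)
    (hbc : orient b c x < 0 ∨ orient b c x = 0 ∧ orient b c y < 0)
    (hca : orient c a x < 0 ∨ orient c a x = 0 ∧ orient c a y < 0) :
    ∃ z ∈ segment ℝ x y, z ∈ triInt (a, b, c) := by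
  have hle : ∀ᶠ δ : ℝ in 𝓝[>] 0, δ < 1 :=
    (eventually_lt_nhds zero_lt_one).filter_mono nhdsWithin_le_nhds
  obtain ⟨δ, hab, hbc, hca, hδ₁, hδ₀⟩ :=
    ((eventually_orient_combo_neg hab).and <| (eventually_orient_combo_neg hbc).and <|
      (eventually_orient_combo_neg hca).and <| hle.and self_mem_nhdsWithin).exists
  exact ⟨(1 - δ) • x + δ • y,
    ⟨1 - δ, δ, sub_nonneg.2 hδ₁.le, le_of_lt hδ₀, sub_add_cancel 1 δ, rfl⟩,
    mem_triInt_of_orient_neg h hab hbc hca⟩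

lemma triHull_subset_closure_triInt (h : orient a b c < 0) :
    triHull (a, b, c) ⊆ closure (triInt (a, b, c)) := by
  have hne : (triInt (a, b, c)).Nonempty := by
    have hab : orient a b ((1 / 2 : ℝ) • b + (1 / 2 : ℝ) • c) < 0 := by
      rw [orient_combo a b b c (by norm_num), orient_self_right]
      linarith
    have hca : orient c a ((1 / 2 : ℝ) • b + (1 / 2 : ℝ) • c) < 0 := by
      rw [orient_combo c a b c (by norm_num), orient_self_left, orient_rotate b c a,
        orient_rotate a b c]
      linarith
    obtain ⟨z, -, hz⟩ := exists_mem_segment_triInt h (Or.inr ⟨orient_self_left a b, hab⟩)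
      (Or.inl ((orient_rotate a b c).trans_lt h)) (Or.inr ⟨orient_self_right c a, hca⟩)
    exact ⟨z, hz⟩
  rw [triInt, (convex_triHull _).closure_interior_eq_closure_of_nonempty_interior hne]
  exact subset_closure

end Triangle

/-! ### Faces and edges of a triangulation -/

/-- The segment `ab` is an edge of the triangulation, that is, a side of one of its faces. -/
def IsEdge {S : Finset Pt} (T : Triangulation S) (a b : Pt) : Prop :=
  ∃ c, IsFace T a b c ∨ IsFace T b a c

/-- A boundary vertex of a triangulation, described by face incidences alone: some face has a side
`vw` which no face contains in the opposite direction. -/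
def IsBoundaryVertex {S : Finset Pt} (T : Triangulation S) (v : Pt) : Prop :=
  ∃ w u, IsFace T v w u ∧ ∀ u', ¬ IsFace T w v u'

section Faces

variable {S : Finset Pt} {T : Triangulation S} {a b c p q u v w x : Pt}

lemma IsFace.rotate (h : IsFace T a b c) : IsFace T b c a :=
  Or.rotate h

lemma IsFace.exists_mem_faces (h : IsFace T a b c) :
    ∃ t ∈ T.faces, triPts t = triPts (a, b, c) := by
  rcases h with h | h | h
  · exact ⟨_, h, rfl⟩
  · exact ⟨_, h, triPts_rotate a b c⟩
  · exact ⟨_, h, (triPts_rotate c a b).symm⟩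

lemma IsFace.orient_neg (h : IsFace T a b c) : orient a b c < 0 := by
  rcases h with h | h | h
  · exact T.cw_face _ h
  · exact (orient_rotate a b c).symm.trans_lt (T.cw_face _ h)
  · exact (orient_rotate c a b).trans_lt (T.cw_face _ h)

lemma IsFace.triPts_subset (h : IsFace T a b c) : triPts (a, b, c) ⊆ (S : Set Pt) := by
  obtain ⟨t, ht, heq⟩ := h.exists_mem_faces
  exact heq ▸ T.verts_mem t ht

lemma IsFace.mem_triPts_of_mem_triHull (h : IsFace T a b c) (hp : p ∈ S)
    (hpt : p ∈ triHull (a, b, c)) : p ∈ triPts (a, b, c) := by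
  obtain ⟨t, ht, heq⟩ := h.exists_mem_faces
  rw [triHull, ← heq] at hpt
  exact heq ▸ T.empty_face t ht p hp hpt

lemma IsFace.isEdge (h : IsFace T a b c) (hp : p ∈ triPts (a, b, c)) (hq : q ∈ triPts (a, b, c))
    (hpq : p ≠ q) : IsEdge T p q := by
  rcases hp with rfl | rfl | rfl <;> rcases hq with rfl | rfl | rfl
  any_goals exact absurd rfl hpq
  · exact ⟨_, Or.inl h⟩
  · exact ⟨_, Or.inr h.rotate.rotate⟩
  · exact ⟨_, Or.inr h⟩
  · exact ⟨_, Or.inl h.rotate⟩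
  · exact ⟨_, Or.inl h.rotate.rotate⟩
  · exact ⟨_, Or.inr h.rotate⟩

lemma Triangulation.exists_isFace_mem_triHull (T : Triangulation S)
    (hx : x ∈ convexHull ℝ (S : Set Pt)) : ∃ a b c, IsFace T a b c ∧ x ∈ triHull (a, b, c) := by
  rw [← T.cover] at hx
  simp only [Set.mem_iUnion] at hx
  obtain ⟨⟨a, b, c⟩, ht, hx⟩ := hx
  exact ⟨a, b, c, Or.inl ht, hx⟩

lemma IsFace.triPts_eq {a' b' c' : Pt} (h : IsFace T a b c) (h' : IsFace T a' b' c')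
    (hx : x ∈ triHull (a, b, c)) (hx' : x ∈ triInt (a', b', c')) :
    triPts (a, b, c) = triPts (a', b', c') := by
  obtain ⟨y, hy', hy⟩ := mem_closure_iff.1 (triHull_subset_closure_triInt h.orient_neg hx)
    _ isOpen_interior hx'
  obtain ⟨t, ht, heq⟩ := h.exists_mem_faces
  obtain ⟨t', ht', heq'⟩ := h'.exists_mem_faces
  rw [triInt, triHull, ← heq] at hy
  rw [triHull, ← heq'] at hy'
  have htt' : t = t' := by
    by_contra hne
    exact Set.notMem_empty y (T.disj t ht t' ht' hne ▸ ⟨hy, hy'⟩)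
  rw [← heq, ← heq', htt']

lemma IsFace.not_isEdge_of_mem_cone (h : IsFace T a b c) (hbc : orient b c p < 0)
    (hca : orient c a p < 0) : ¬ IsEdge T p c := by
  intro hedge
  obtain ⟨a', b', c', h', hp, hc⟩ : ∃ a' b' c', IsFace T a' b' c' ∧
      p ∈ triPts (a', b', c') ∧ c ∈ triPts (a', b', c') := by
    obtain ⟨d, h' | h'⟩ := hedge
    · exact ⟨_, _, _, h', left_mem_triPts _ _ _, middle_mem_triPts _ _ _⟩
    · exact ⟨_, _, _, h', middle_mem_triPts _ _ _, left_mem_triPts _ _ _⟩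
  obtain ⟨x, hx, hxint⟩ := exists_mem_segment_triInt h.orient_neg (Or.inl h.orient_neg)
    (Or.inr ⟨orient_self_right b c, hbc⟩) (Or.inr ⟨orient_self_left c a, hca⟩)
  have hx' : x ∈ triHull (a', b', c') :=
    (convex_triHull _).segment_subset (triPts_subset_triHull _ hc)
      (triPts_subset_triHull _ hp) hx
  rw [h'.triPts_eq h hx' hxint] at hp
  rcases hp with rfl | rfl | rfl
  · exact hca.ne (orient_self_right _ _)
  · exact hbc.ne (orient_self_left _ _)
  · exact hbc.ne (orient_self_right _ _)

/-! ### Boundary vertices -/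

lemma Triangulation.exists_isFace_beyond (T : Triangulation S)
    (hx : x ∈ interior (convexHull ℝ (S : Set Pt))) (hvx : orient v w x = 0)
    (hvu : orient v w u < 0) :
    ∃ a b c, IsFace T a b c ∧ x ∈ triHull (a, b, c) ∧
      ∃ y ∈ triHull (a, b, c), 0 < orient v w y := by
  have hcl := mem_closure_inter_orient_pos hx hvx hvu
  rw [← T.cover, Set.iUnion₂_inter, T.faces.closure_biUnion] at hcl
  simp only [Set.mem_iUnion] at hcl
  obtain ⟨⟨a, b, c⟩, ht, hxt⟩ := hcl
  obtain ⟨y, hy, hpos⟩ := closure_nonempty_iff.1 ⟨x, hxt⟩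
  exact ⟨a, b, c, Or.inl ht,
    (isClosed_triHull _).closure_subset_iff.2 Set.inter_subset_left hxt, y, hy, hpos⟩

lemma IsFace.left_ne_middle (h : IsFace T a b c) : a ≠ b := by
  rintro rfl
  simpa [orient] using h.orient_neg

lemma IsFace.notMem_of_mem_openSegment (h : IsFace T v w u) (hx : x ∈ openSegment ℝ v w) :
    x ∉ S := by
  intro hxS
  have hxvw := openSegment_subset_segment ℝ v w hx
  rcases h.mem_triPts_of_mem_triHull hxS (segment_subset_triHull v w u hxvw) with rfl | rfl | rfl
  · exact h.left_ne_middle (left_mem_openSegment_iff.1 hx)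
  · exact h.left_ne_middle (right_mem_openSegment_iff.1 hx)
  · exact h.orient_neg.ne (orient_eq_zero_of_mem_segment hxvw)

lemma IsFace.orient_nonneg_of_mem_triPts {a' b' c' y : Pt} (h : IsFace T a b c)
    (h' : IsFace T a' b' c') (hne : triPts (a', b', c') ≠ triPts (a, b, c))
    (hx : x ∈ triHull (a, b, c)) (hx' : x ∈ triHull (a', b', c')) (hxS : x ∉ S)
    (hab : orient a b x = 0) (hy : y ∈ triPts (a', b', c')) : 0 ≤ orient a b y := by
  obtain ⟨-, hbc, hca⟩ := (mem_triHull_iff h.orient_neg).1 hx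
  have hbc : orient b c x < 0 := hbc.lt_of_ne fun hbc => hxS <|
    eq_of_orient_eq_zero h.orient_neg.ne hab hbc ▸ h.triPts_subset (middle_mem_triPts a b c)
  have hca : orient c a x < 0 := hca.lt_of_ne fun hca => hxS <|
    eq_of_orient_eq_zero h.rotate.rotate.orient_neg.ne hca hab ▸
      h.triPts_subset (left_mem_triPts a b c)
  by_contra! hlt
  -- The segment from `x` to `y` stays in the second face and enters the interior of the first.
  obtain ⟨z, hz, hzint⟩ :=
    exists_mem_segment_triInt h.orient_neg (Or.inr ⟨hab, hlt⟩) (Or.inl hbc) (Or.inl hca)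
  exact hne <| h'.triPts_eq h
    ((convex_triHull _).segment_subset hx' (triPts_subset_triHull _ hy) hz) hzint

lemma IsFace.eq_or_eq_of_mem_openSegment (hS : GenPos (S : Set Pt)) (h : IsFace T v w u)
    (h' : IsFace T a b c) (hne : triPts (v, w, u) ≠ triPts (a, b, c))
    (hx : x ∈ openSegment ℝ v w) (hx' : x ∈ triHull (a, b, c)) (hab : orient a b x = 0) :
    v = a ∧ w = b ∨ v = b ∧ w = a := by
  have hxt := segment_subset_triHull v w u (openSegment_subset_segment ℝ v w hx)
  have hnonneg {y : Pt} (hy : y ∈ triPts (v, w, u)) : 0 ≤ orient a b y :=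
    h'.orient_nonneg_of_mem_triPts h hne hx' hxt (h.notMem_of_mem_openSegment hx) hab hy
  have hv := hnonneg (left_mem_triPts v w u)
  have hw := hnonneg (middle_mem_triPts v w u)
  obtain ⟨hv, hw⟩ : orient a b v = 0 ∧ orient a b w = 0 := by
    obtain ⟨s, t, hs, ht, hst, rfl⟩ := hx
    rw [orient_combo a b v w hst] at hab
    constructor <;> nlinarith [mul_nonneg hs.le hv, mul_nonneg ht.le hw]
  have heq {y : Pt} (hy : y ∈ triPts (v, w, u)) (hy0 : orient a b y = 0) : y = a ∨ y = b :=
    hS.eq_or_eq_of_orient_eq_zero (h'.triPts_subset (left_mem_triPts a b c))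
      (h'.triPts_subset (middle_mem_triPts a b c)) (h.triPts_subset hy) h'.left_ne_middle hy0
  have hvw := h.left_ne_middle
  rcases heq (left_mem_triPts v w u) hv with rfl | rfl <;>
    rcases heq (middle_mem_triPts v w u) hw with rfl | rfl <;> simp_all

lemma IsFace.exists_side (h : IsFace T a b c) (hx : x ∈ triHull (a, b, c))
    (hxint : x ∉ triInt (a, b, c)) :
    ∃ a' b' c', IsFace T a' b' c' ∧ triPts (a', b', c') = triPts (a, b, c) ∧
      orient a' b' x = 0 := by
  obtain ⟨hab, hbc, hca⟩ := (mem_triHull_iff h.orient_neg).1 hx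
  by_contra! hne
  exact hxint <| mem_triInt_of_orient_neg h.orient_neg (hab.lt_of_ne (hne a b c h rfl))
    (hbc.lt_of_ne (hne b c a h.rotate (triPts_rotate a b c)))
    (hca.lt_of_ne (hne c a b h.rotate.rotate (triPts_rotate c a b).symm))

lemma IsFace.exists_isFace_swap (hS : GenPos (S : Set Pt)) (h : IsFace T v w u)
    (hv : v ∈ interior (convexHull ℝ (S : Set Pt))) : ∃ u', IsFace T w v u' := by
  have hx : midpoint ℝ v w ∈ openSegment ℝ v w := midpoint_mem_openSegment v w
  set x := midpoint ℝ v w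
  have hxvw := openSegment_subset_segment ℝ v w hx
  have hw : w ∈ convexHull ℝ (S : Set Pt) :=
    subset_convexHull ℝ _ (h.triPts_subset (middle_mem_triPts v w u))
  have hxint : x ∈ interior (convexHull ℝ (S : Set Pt)) :=
    (convex_convexHull ℝ _).openSegment_interior_self_subset_interior hv hw hx
  obtain ⟨a, b, c, h', hx', y, hy, hpos⟩ :=
    T.exists_isFace_beyond hxint (orient_eq_zero_of_mem_segment hxvw) h.orient_neg
  have hbeyond : ¬ triPts (a, b, c) ⊆ {z | orient v w z ≤ 0} := fun hle =>
    (orient_nonpos_of_mem_convexHull hle hy).not_gt hpos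
  have hside {c : Pt} (h : IsFace T v w c) : triPts (v, w, c) ⊆ {z | orient v w z ≤ 0} := by
    rintro z (rfl | rfl | rfl)
    exacts [(orient_self_left _ _).le, (orient_self_right _ _).le, h.orient_neg.le]
  have hne : triPts (v, w, u) ≠ triPts (a, b, c) := fun heq => hbeyond (heq ▸ hside h)
  have hx'int : x ∉ triInt (a, b, c) := fun hx'int =>
    hne (h.triPts_eq h' (segment_subset_triHull v w u hxvw) hx'int)
  obtain ⟨a', b', c', h'', heq, hab⟩ := h'.exists_side hx' hx'int
  rw [triHull, ← heq] at hx'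
  rw [← heq] at hne hbeyond
  rcases h.eq_or_eq_of_mem_openSegment hS h'' hne hx hx' hab with ⟨rfl, rfl⟩ | ⟨rfl, rfl⟩
  · exact absurd (hside h'') hbeyond
  · exact ⟨c', h''⟩

lemma not_isBoundaryVertex_of_mem_interior (hS : GenPos (S : Set Pt))
    (hv : v ∈ interior (convexHull ℝ (S : Set Pt))) : ¬ IsBoundaryVertex T v := by
  rintro ⟨w, u, h, hswap⟩
  obtain ⟨u', h'⟩ := h.exists_isFace_swap hS hv
  exact hswap u' h'

lemma Triangulation.isEdge_of_orient_nonpos (T : Triangulation S) (hS : GenPos (S : Set Pt))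
    (hv : v ∈ S) (hw : w ∈ S) (hvw : v ≠ w) (hside : ∀ y ∈ S, orient v w y ≤ 0) :
    IsEdge T v w := by
  set x := midpoint ℝ v w
  have hx0 : orient v w x = 0 := orient_eq_zero_of_mem_segment (midpoint_mem_segment v w)
  obtain ⟨a, b, c, h, hx⟩ := T.exists_isFace_mem_triHull <|
    (convex_convexHull ℝ _).segment_subset (subset_convexHull ℝ _ hv) (subset_convexHull ℝ _ hw)
      (midpoint_mem_segment v w)
  have hcases {y : Pt} (hy : y ∈ triPts (a, b, c)) : y = v ∨ y = w ∨ orient v w y < 0 := by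
    have hyS := h.triPts_subset hy
    rcases (hside y hyS).lt_or_eq with hlt | h0
    · exact Or.inr (Or.inr hlt)
    · exact (hS.eq_or_eq_of_orient_eq_zero hv hw hyS hvw h0).imp_right Or.inl
  refine h.isEdge ?_ ?_ hvw <;> by_contra hnot
  · have hw' : ∀ y ∈ triPts (a, b, c), y = w ∨ orient v w y < 0 := fun y hy =>
      (hcases hy).resolve_left fun heq => hnot (heq ▸ hy)
    rcases eq_or_orient_neg_of_mem_convexHull hw' (orient_self_right v w) hx with hxw | hlt
    · exact hvw ((midpoint_eq_right_iff ℝ).1 hxw)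
    · exact hlt.ne hx0
  · have hv' : ∀ y ∈ triPts (a, b, c), y = v ∨ orient v w y < 0 := fun y hy =>
      (hcases hy).imp_right fun hy' => hy'.resolve_left fun heq => hnot (heq ▸ hy)
    rcases eq_or_orient_neg_of_mem_convexHull hv' (orient_self_left v w) hx with hxv | hlt
    · exact hvw ((midpoint_eq_left_iff ℝ).1 hxv)
    · exact hlt.ne hx0

lemma Triangulation.isBoundaryVertex_of_orient_nonpos (T : Triangulation S)
    (hS : GenPos (S : Set Pt)) (hv : v ∈ S) (hw : w ∈ S) (hvw : v ≠ w)
    (hside : ∀ y ∈ S, orient v w y ≤ 0) : IsBoundaryVertex T v := by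
  have hswap (u : Pt) : ¬ IsFace T w v u := fun h => by
    have hu := hside u (h.triPts_subset (right_mem_triPts w v u))
    have hneg := h.orient_neg
    rw [orient_swap v w u] at hneg
    linarith
  obtain ⟨u, h | h⟩ := T.isEdge_of_orient_nonpos hS hv hw hvw hside
  · exact ⟨w, u, h, hswap⟩
  · exact absurd h (hswap u)

end Faces

/-! ### Compatible triangulations -/

section Compatible

variable {S S' : Finset Pt} {T : Triangulation S} {T' : Triangulation S'} {f : Pt → Pt} {a b v : Pt}

lemma CompatibleVia.isEdge (hf : CompatibleVia T T' f) (h : IsEdge T a b) :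
    IsEdge T' (f a) (f b) := by
  obtain ⟨c, h | h⟩ := h
  · exact ⟨f c, Or.inl <| (hf.2 a (h.triPts_subset (left_mem_triPts a b c))
      b (h.triPts_subset (middle_mem_triPts a b c))
      c (h.triPts_subset (right_mem_triPts a b c))).1 h⟩
  · exact ⟨f c, Or.inr <| (hf.2 b (h.triPts_subset (left_mem_triPts b a c))
      a (h.triPts_subset (middle_mem_triPts b a c))
      c (h.triPts_subset (right_mem_triPts b a c))).1 h⟩

lemma isBoundaryVertex_iff_exists_mem :
    IsBoundaryVertex T v ↔
      ∃ w ∈ (S : Set Pt), (∃ u ∈ (S : Set Pt), IsFace T v w u) ∧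
        ∀ u ∈ (S : Set Pt), ¬ IsFace T w v u := by
  constructor
  · rintro ⟨w, u, h, hswap⟩
    exact ⟨w, h.triPts_subset (middle_mem_triPts v w u),
      ⟨u, h.triPts_subset (right_mem_triPts v w u), h⟩, fun u' _ => hswap u'⟩
  · rintro ⟨w, -, ⟨u, -, h⟩, hswap⟩
    exact ⟨w, u, h, fun u' h' => hswap u' (h'.triPts_subset (right_mem_triPts w v u')) h'⟩

lemma CompatibleVia.isBoundaryVertex_iff (hf : CompatibleVia T T' f) (hv : v ∈ S) :
    IsBoundaryVertex T' (f v) ↔ IsBoundaryVertex T v := by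
  simp only [isBoundaryVertex_iff_exists_mem, ← hf.1.image_eq, Set.exists_mem_image,
    Set.forall_mem_image]
  refine exists_congr fun w => and_congr_right fun hw => and_congr ?_ ?_
  · exact exists_congr fun u => and_congr_right fun hu => (hf.2 v hv w hw u hu).symm
  · exact forall₂_congr fun u hu => not_congr (hf.2 w hw v hv u hu).symm

end Compatible

/-! ### Lattice point sets -/

/-- The lattice point `q` as a point of the plane. -/
def latticePt (q : ℤ × ℤ) : Pt := !₂[(q.1 : ℝ), (q.2 : ℝ)]

/-- The orientation `orient` of three lattice points, computed in `ℤ` so that it can be decided. -/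
def latticeOrient (a b c : ℤ × ℤ) : ℤ :=
  (b.1 - a.1) * (c.2 - a.2) - (b.2 - a.2) * (c.1 - a.1)

/-- Membership of the lattice point `x` in the closed triangle `abc`, which is meant to be
clockwise: for a counterclockwise triangle the condition does not describe membership. -/
abbrev InTriangle (a b c x : ℤ × ℤ) : Prop :=
  latticeOrient a b x ≤ 0 ∧ latticeOrient b c x ≤ 0 ∧ latticeOrient c a x ≤ 0

section Lattice

variable {ι κ : Type*} [Fintype ι] [Fintype κ]

/-- The finite set of points with the given lattice coordinates. -/
def pointSet (P : ι → ℤ × ℤ) : Finset Pt :=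
  Finset.univ.image fun i => latticePt (P i)

/-- The points of index `i`, `j`, `k` are the corners of a clockwise triangle containing no other
point of the family `P`: these are the candidates for the faces of a triangulation. -/
abbrev IsEmptyTriangle (P : ι → ℤ × ℤ) (i j k : ι) : Prop :=
  latticeOrient (P i) (P j) (P k) < 0 ∧
    ∀ l, InTriangle (P i) (P j) (P k) (P l) → l = i ∨ l = j ∨ l = k

/-- The points `P` are distinct and in general position, and `H` indexes the extreme ones. The
extreme points are certified by a supporting line through a second point of the family, the other
ones by a triangle around them. -/
structure IsHullPartition (P : ι → ℤ × ℤ) (H : Finset ι) : Prop where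
  injective : Function.Injective P
  latticeOrient_ne_zero : ∀ i j k, i ≠ j → i ≠ k → j ≠ k → latticeOrient (P i) (P j) (P k) ≠ 0
  exists_support : ∀ i ∈ H, ∃ j, (∃ k, latticeOrient (P i) (P j) (P k) < 0) ∧
    ∀ k, latticeOrient (P i) (P j) (P k) ≤ 0
  exists_triangle : ∀ l ∉ H, ∃ i j k, latticeOrient (P i) (P j) (P k) < 0 ∧
    latticeOrient (P i) (P j) (P l) < 0 ∧ latticeOrient (P j) (P k) (P l) < 0 ∧
      latticeOrient (P k) (P i) (P l) < 0

variable {P : ι → ℤ × ℤ} {Q : κ → ℤ × ℤ} {H : Finset ι} {K : Finset κ} {a b c x : ℤ × ℤ}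

lemma latticePt_injective : Function.Injective latticePt := by
  intro a b h
  have h0 := congrArg (· 0) h
  have h1 := congrArg (· 1) h
  simp only [latticePt, PiLp.toLp_apply, Matrix.cons_val_zero, Matrix.cons_val_one,
    Int.cast_inj] at h0 h1
  exact Prod.ext h0 h1

lemma orient_latticePt (a b c : ℤ × ℤ) :
    orient (latticePt a) (latticePt b) (latticePt c) = latticeOrient a b c := by
  simp [orient, latticePt, latticeOrient]

lemma orient_latticePt_neg :
    orient (latticePt a) (latticePt b) (latticePt c) < 0 ↔ latticeOrient a b c < 0 := by
  rw [orient_latticePt, Int.cast_lt_zero]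

lemma latticePt_mem_triHull (h : latticeOrient a b c < 0) :
    latticePt x ∈ triHull (latticePt a, latticePt b, latticePt c) ↔ InTriangle a b c x := by
  rw [mem_triHull_iff (orient_latticePt_neg.2 h)]
  simp only [orient_latticePt, Int.cast_nonpos]

lemma mem_pointSet {p : Pt} : p ∈ pointSet P ↔ ∃ i, latticePt (P i) = p := by
  simp [pointSet]

lemma latticePt_mem_pointSet (P : ι → ℤ × ℤ) (i : ι) : latticePt (P i) ∈ pointSet P :=
  mem_pointSet.2 ⟨i, rfl⟩

lemma triHull_subset_convexHull_pointSet (P : ι → ℤ × ℤ) (i j k : ι) :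
    triHull (latticePt (P i), latticePt (P j), latticePt (P k)) ⊆
      convexHull ℝ (pointSet P : Set Pt) := by
  refine convexHull_mono ?_
  rintro _ (rfl | rfl | rfl) <;> exact latticePt_mem_pointSet P _

lemma IsHullPartition.card_pointSet (hP : IsHullPartition P H) :
    (pointSet P).card = Fintype.card ι :=
  Finset.card_image_of_injective _ (latticePt_injective.comp hP.injective)

lemma IsHullPartition.genPos (hP : IsHullPartition P H) : GenPos (pointSet P : Set Pt) := by
  intro p hp q hq r hr hpq hpr hqr
  obtain ⟨i, rfl⟩ := mem_pointSet.1 hp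
  obtain ⟨j, rfl⟩ := mem_pointSet.1 hq
  obtain ⟨k, rfl⟩ := mem_pointSet.1 hr
  rw [collinear_iff_orient_eq_zero, orient_latticePt, Int.cast_eq_zero]
  exact hP.latticeOrient_ne_zero i j k (fun h => hpq (by rw [h])) (fun h => hpr (by rw [h]))
    (fun h => hqr (by rw [h]))

lemma IsHullPartition.exists_orient_nonpos (hP : IsHullPartition P H) {i : ι} (hi : i ∈ H) :
    ∃ w ∈ pointSet P, (∃ u ∈ pointSet P, orient (latticePt (P i)) w u < 0) ∧
      ∀ y ∈ pointSet P, orient (latticePt (P i)) w y ≤ 0 := by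
  obtain ⟨j, ⟨k, hk⟩, hside⟩ := hP.exists_support i hi
  refine ⟨_, latticePt_mem_pointSet P j,
    ⟨_, latticePt_mem_pointSet P k, orient_latticePt_neg.2 hk⟩, fun y hy => ?_⟩
  obtain ⟨l, rfl⟩ := mem_pointSet.1 hy
  rw [orient_latticePt]
  exact Int.cast_nonpos.2 (hside l)

lemma IsHullPartition.mem_interior_iff (hP : IsHullPartition P H) {i : ι} :
    latticePt (P i) ∈ interior (convexHull ℝ (pointSet P : Set Pt)) ↔ i ∉ H := by
  constructor
  · intro hint hi
    obtain ⟨w, -, ⟨u, -, hu⟩, hside⟩ := hP.exists_orient_nonpos hi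
    exact notMem_interior_convexHull hside (orient_self_left _ _) hu hint
  · intro hi
    obtain ⟨j, k, l, h, hjk, hkl, hlj⟩ := hP.exists_triangle i hi
    exact interior_mono (triHull_subset_convexHull_pointSet P j k l) <|
      mem_triInt_of_orient_neg (orient_latticePt_neg.2 h) (orient_latticePt_neg.2 hjk)
        (orient_latticePt_neg.2 hkl) (orient_latticePt_neg.2 hlj)

lemma IsHullPartition.hullCount_pointSet (hP : IsHullPartition P H) :
    hullCount (pointSet P) = H.card := by
  have hclosed : IsClosed (convexHull ℝ (pointSet P : Set Pt)) :=
    (pointSet P).finite_toSet.isClosed_convexHull ℝ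
  have hfilter : (pointSet P).filter (fun p => p ∈ frontier (convexHull ℝ (pointSet P : Set Pt))) =
      H.image fun i => latticePt (P i) := by
    ext p
    rw [Finset.mem_filter, Finset.mem_image, hclosed.frontier_eq]
    constructor
    · rintro ⟨hp, -, hint⟩
      obtain ⟨i, rfl⟩ := mem_pointSet.1 hp
      exact ⟨i, not_not.1 (hP.mem_interior_iff.not.1 hint), rfl⟩
    · rintro ⟨i, hi, rfl⟩
      have hmem := latticePt_mem_pointSet P i
      exact ⟨hmem, subset_convexHull ℝ _ hmem, fun hint => hP.mem_interior_iff.1 hint hi⟩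
  rw [hullCount, hfilter]
  exact Finset.card_image_of_injective _ (latticePt_injective.comp hP.injective)

lemma IsHullPartition.isBoundaryVertex_iff (hP : IsHullPartition P H)
    (T : Triangulation (pointSet P)) {i : ι} : IsBoundaryVertex T (latticePt (P i)) ↔ i ∈ H := by
  constructor
  · intro h
    by_contra hi
    exact not_isBoundaryVertex_of_mem_interior hP.genPos (hP.mem_interior_iff.2 hi) h
  · intro hi
    obtain ⟨w, hw, ⟨u, -, hu⟩, hside⟩ := hP.exists_orient_nonpos hi
    refine T.isBoundaryVertex_of_orient_nonpos hP.genPos (latticePt_mem_pointSet P i) hw ?_ hside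
    rintro rfl
    simp [orient] at hu

lemma Compatible.exists_index_map (hP : IsHullPartition P H) (hQ : IsHullPartition Q K)
    {T : Triangulation (pointSet P)} {T' : Triangulation (pointSet Q)} (h : Compatible T T') :
    ∃ σ : ι → κ, Function.Surjective σ ∧ (∀ i, σ i ∈ K ↔ i ∈ H) ∧
      (∀ i j, IsEdge T (latticePt (P i)) (latticePt (P j)) →
        IsEdge T' (latticePt (Q (σ i))) (latticePt (Q (σ j)))) ∧
      ∀ i j k, IsFace T (latticePt (P i)) (latticePt (P j)) (latticePt (P k)) →
        IsFace T' (latticePt (Q (σ i))) (latticePt (Q (σ j))) (latticePt (Q (σ k))) := by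
  obtain ⟨f, hf⟩ := h
  have hmem := latticePt_mem_pointSet P
  choose σ hσ using fun i => mem_pointSet.1 (hf.1.mapsTo (hmem i))
  refine ⟨σ, fun k => ?_, fun i => ?_, fun i j hij => ?_, fun i j k hijk => ?_⟩
  · obtain ⟨p, hp, hpk⟩ := hf.1.surjOn (latticePt_mem_pointSet Q k)
    obtain ⟨i, rfl⟩ := mem_pointSet.1 hp
    exact ⟨i, hQ.injective (latticePt_injective ((hσ i).trans hpk))⟩
  · rw [← hQ.isBoundaryVertex_iff T', hσ, hf.isBoundaryVertex_iff (hmem i),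
      hP.isBoundaryVertex_iff]
  · simpa only [hσ] using hf.isEdge hij
  · simpa only [hσ] using (hf.2 _ (hmem i) _ (hmem j) _ (hmem k)).1 hijk

lemma Triangulation.exists_isFace_inTriangle (hP : Function.Injective P)
    (T : Triangulation (pointSet P))
    (hx : latticePt x ∈ convexHull ℝ (pointSet P : Set Pt)) :
    ∃ i j k, IsFace T (latticePt (P i)) (latticePt (P j)) (latticePt (P k)) ∧
      IsEmptyTriangle P i j k ∧ InTriangle (P i) (P j) (P k) x := by
  obtain ⟨a, b, c, h, hxt⟩ := T.exists_isFace_mem_triHull hx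
  obtain ⟨i, rfl⟩ := mem_pointSet.1 (h.triPts_subset (left_mem_triPts a b c))
  obtain ⟨j, rfl⟩ := mem_pointSet.1 (h.triPts_subset (middle_mem_triPts _ b c))
  obtain ⟨k, rfl⟩ := mem_pointSet.1 (h.triPts_subset (right_mem_triPts _ _ c))
  have hneg := orient_latticePt_neg.1 h.orient_neg
  refine ⟨i, j, k, h, ⟨hneg, fun l hl => ?_⟩, (latticePt_mem_triHull hneg).1 hxt⟩
  have hinj := latticePt_injective.comp hP
  exact (h.mem_triPts_of_mem_triHull (latticePt_mem_pointSet P l)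
    ((latticePt_mem_triHull hneg).2 hl)).imp (@hinj l i) (Or.imp (@hinj l j) (@hinj l k))

lemma Triangulation.isEdge_of_forall_isEmptyTriangle (hP : Function.Injective P)
    (T : Triangulation (pointSet P)) {r s : ι} (hrs : r ≠ s)
    (hx : latticePt x ∈ convexHull ℝ (pointSet P : Set Pt))
    (h : ∀ i j k, IsEmptyTriangle P i j k → InTriangle (P i) (P j) (P k) x →
      (r = i ∨ r = j ∨ r = k) ∧ (s = i ∨ s = j ∨ s = k)) :
    IsEdge T (latticePt (P r)) (latticePt (P s)) := by
  obtain ⟨i, j, k, hface, hempty, hxt⟩ := T.exists_isFace_inTriangle hP hx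
  obtain ⟨hr, hs⟩ := h i j k hempty hxt
  have hmem {l : ι} (hl : l = i ∨ l = j ∨ l = k) :
      latticePt (P l) ∈ triPts (latticePt (P i), latticePt (P j), latticePt (P k)) := by
    rcases hl with rfl | rfl | rfl <;> simp [triPts]
  exact hface.isEdge (hmem hr) (hmem hs) ((latticePt_injective.comp hP).ne hrs)

end Lattice

/-! ### The three configurations -/

/-- In each of the three configurations the first four points are the extreme ones. -/
def extremeIndices : Finset (Fin 7) := {0, 1, 2, 3}

/-- A configuration in which every triangulation joins the extreme point `0` to all three interior
points. -/
def starPoints : Fin 7 → ℤ × ℤ :=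
  ![(2, 0), (0, 5), (3, 5), (5, 4), (1, 4), (4, 3), (3, 3)]

/-- A configuration in which the three interior points form a face of every triangulation. -/
def innerFacePoints : Fin 7 → ℤ × ℤ :=
  ![(0, 0), (1, 5), (2, 5), (4, 2), (1, 1), (2, 3), (3, 2)]

/-- A configuration in which the triangle of the interior points hides one of its corners from each
of the extreme points. -/
def hiddenCornerPoints : Fin 7 → ℤ × ℤ :=
  ![(4, 1), (0, 2), (5, 5), (5, 1), (3, 3), (1, 2), (2, 3)]

lemma isHullPartition_starPoints : IsHullPartition starPoints extremeIndices where
  injective := by decide +kernel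
  latticeOrient_ne_zero := by decide +kernel
  exists_support := by decide +kernel
  exists_triangle := by decide +kernel

lemma isHullPartition_innerFacePoints : IsHullPartition innerFacePoints extremeIndices where
  injective := by decide +kernel
  latticeOrient_ne_zero := by decide +kernel
  exists_support := by decide +kernel
  exists_triangle := by decide +kernel

lemma isHullPartition_hiddenCornerPoints : IsHullPartition hiddenCornerPoints extremeIndices where
  injective := by decide +kernel
  latticeOrient_ne_zero := by decide +kernel
  exists_support := by decide +kernel
  exists_triangle := by decide +kernel

lemma isEdge_starPoints (T : Triangulation (pointSet starPoints)) {r : Fin 7}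
    (hr : r ∉ extremeIndices) : IsEdge T (latticePt (starPoints 0)) (latticePt (starPoints r)) := by
  have hcw : latticeOrient (starPoints 0) (starPoints 1) (starPoints 3) < 0 := by
    decide +kernel
  have htest : ∀ r ∉ extremeIndices, ∃ x ∈ ({(2, 3), (3, 2)} : Finset (ℤ × ℤ)),
      InTriangle (starPoints 0) (starPoints 1) (starPoints 3) x ∧
        ∀ i j k, IsEmptyTriangle starPoints i j k →
          InTriangle (starPoints i) (starPoints j) (starPoints k) x →
            (0 = i ∨ 0 = j ∨ 0 = k) ∧ (r = i ∨ r = j ∨ r = k) := by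
    decide +kernel
  obtain ⟨x, -, hx, hempty⟩ := htest r hr
  refine T.isEdge_of_forall_isEmptyTriangle isHullPartition_starPoints.injective ?_
    (triHull_subset_convexHull_pointSet _ 0 1 3 ((latticePt_mem_triHull hcw).2 hx)) hempty
  rintro rfl
  exact hr (by decide +kernel)

lemma isFace_innerFacePoints (T : Triangulation (pointSet innerFacePoints)) :
    IsFace T (latticePt (innerFacePoints 4)) (latticePt (innerFacePoints 5))
      (latticePt (innerFacePoints 6)) := by
  have hcw : latticeOrient (innerFacePoints 4) (innerFacePoints 5) (innerFacePoints 6) < 0 := by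
    decide +kernel
  have hx : InTriangle (innerFacePoints 4) (innerFacePoints 5) (innerFacePoints 6) (2, 2) := by
    decide +kernel
  obtain ⟨i, j, k, h, hempty, hxt⟩ := T.exists_isFace_inTriangle
    isHullPartition_innerFacePoints.injective
    (triHull_subset_convexHull_pointSet _ 4 5 6 ((latticePt_mem_triHull hcw).2 hx))
  have hunique : ∀ i j k, IsEmptyTriangle innerFacePoints i j k →
      InTriangle (innerFacePoints i) (innerFacePoints j) (innerFacePoints k) (2, 2) →
        i = 4 ∧ j = 5 ∧ k = 6 ∨ i = 5 ∧ j = 6 ∧ k = 4 ∨ i = 6 ∧ j = 4 ∧ k = 5 := by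
    decide +kernel
  rcases hunique i j k hempty hxt with ⟨rfl, rfl, rfl⟩ | ⟨rfl, rfl, rfl⟩ | ⟨rfl, rfl, rfl⟩
  exacts [h, h.rotate.rotate, h.rotate]

lemma exists_not_isEdge_hiddenCornerPoints {T : Triangulation (pointSet hiddenCornerPoints)}
    {h i j k : Fin 7} (hh : h ∈ extremeIndices) (hi : i ∉ extremeIndices)
    (hj : j ∉ extremeIndices) (hk : k ∉ extremeIndices)
    (hface : IsFace T (latticePt (hiddenCornerPoints i)) (latticePt (hiddenCornerPoints j))
      (latticePt (hiddenCornerPoints k))) :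
    ∃ r ∉ extremeIndices,
      ¬ IsEdge T (latticePt (hiddenCornerPoints h)) (latticePt (hiddenCornerPoints r)) := by
  let InCone (h i j k : Fin 7) : Prop :=
    latticeOrient (hiddenCornerPoints j) (hiddenCornerPoints k) (hiddenCornerPoints h) < 0 ∧
      latticeOrient (hiddenCornerPoints k) (hiddenCornerPoints i) (hiddenCornerPoints h) < 0
  have hcone : ∀ h ∈ extremeIndices, ∀ i ∉ extremeIndices, ∀ j ∉ extremeIndices,
      ∀ k ∉ extremeIndices,
        latticeOrient (hiddenCornerPoints i) (hiddenCornerPoints j) (hiddenCornerPoints k) < 0 →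
          InCone h i j k ∨ InCone h j k i ∨ InCone h k i j := by
    simp only [InCone]
    decide +kernel
  have hnot {i j k : Fin 7}
      (hface : IsFace T (latticePt (hiddenCornerPoints i)) (latticePt (hiddenCornerPoints j))
        (latticePt (hiddenCornerPoints k))) (hc : InCone h i j k) :
      ¬ IsEdge T (latticePt (hiddenCornerPoints h)) (latticePt (hiddenCornerPoints k)) :=
    hface.not_isEdge_of_mem_cone (orient_latticePt_neg.2 hc.1) (orient_latticePt_neg.2 hc.2)
  rcases hcone h hh i hi j hj k hk (orient_latticePt_neg.1 hface.orient_neg) with hc | hc | hc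
  exacts [⟨k, hk, hnot hface hc⟩, ⟨i, hi, hnot hface.rotate hc⟩,
    ⟨j, hj, hnot hface.rotate.rotate hc⟩]

/-- There exist three planar point sets, each with 7 points and convex hulls of
equal size, admitting no 3-way compatible triangulation (without Steiner points). -/
theorem exists_three_sets_no_threeway_compatible :
    ∃ S₁ S₂ S₃ : Finset Pt,
      S₁.card = 7 ∧ S₂.card = 7 ∧ S₃.card = 7 ∧
      GenPos (S₁ : Set Pt) ∧ GenPos (S₂ : Set Pt) ∧ GenPos (S₃ : Set Pt) ∧
      hullCount S₁ = hullCount S₂ ∧ hullCount S₂ = hullCount S₃ ∧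
      ¬ ∃ (T₁ : Triangulation S₁) (T₂ : Triangulation S₂) (T₃ : Triangulation S₃),
          Compatible T₁ T₂ ∧ Compatible T₂ T₃ ∧ Compatible T₁ T₃ := by
  refine ⟨pointSet starPoints, pointSet innerFacePoints, pointSet hiddenCornerPoints,
    isHullPartition_starPoints.card_pointSet, isHullPartition_innerFacePoints.card_pointSet,
    isHullPartition_hiddenCornerPoints.card_pointSet, isHullPartition_starPoints.genPos,
    isHullPartition_innerFacePoints.genPos, isHullPartition_hiddenCornerPoints.genPos, ?_, ?_, ?_⟩
  · rw [isHullPartition_starPoints.hullCount_pointSet,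
      isHullPartition_innerFacePoints.hullCount_pointSet]
  · rw [isHullPartition_innerFacePoints.hullCount_pointSet,
      isHullPartition_hiddenCornerPoints.hullCount_pointSet]
  rintro ⟨T₁, T₂, T₃, -, h₂₃, h₁₃⟩
  obtain ⟨σ, hσsurj, hσ, hedge, -⟩ :=
    h₁₃.exists_index_map isHullPartition_starPoints isHullPartition_hiddenCornerPoints
  obtain ⟨τ, -, hτ, -, hface⟩ :=
    h₂₃.exists_index_map isHullPartition_innerFacePoints isHullPartition_hiddenCornerPoints
  obtain ⟨r, hr, hnot⟩ := exists_not_isEdge_hiddenCornerPoints ((hσ 0).2 (by decide +kernel))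
    ((hτ 4).not.2 (by decide +kernel)) ((hτ 5).not.2 (by decide +kernel))
    ((hτ 6).not.2 (by decide +kernel)) (hface 4 5 6 (isFace_innerFacePoints T₂))
  obtain ⟨s, rfl⟩ := hσsurj r
  exact hnot (hedge 0 s (isEdge_starPoints T₁ ((hσ s).not.1 hr)))
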